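/- arXiv:1409.2135 — 2 statements merged into one kernel-verified Lean document; each statement's English description precedes it below -/
import Mathlib

section
/- Let 1 ≤ r ≤ s ≤ n-2 and let a_1,…,a_r,α_{r+1},…,α_s and b_1,…,b_r,β_{r+1},…,β_s be two sequences of indices in {1,…,n}, each consisting of pairwise distinct entries, such that: (i) x_{α_ℓ β_ℓ} ∈ U for r+1 ≤ ℓ ≤ s; (ii) a_i < β_j and x_{a_i β_j} ∉ D ∪ U for all 1 ≤ i ≤ r and r+1 ≤ j ≤ s; (iii) x_{α_i β_j} ∉ D ∪ U for all r+1 ≤ i < j ≤ s; (iv) the leading monomial in_≺([a_1,…,a_r | b_1,…,b_r]) is a product of variables from U. Then in_≺([a_1,…,a_r,α_{r+1},…,α_s | b_1,…,b_r,β_{r+1},…,β_s]) = in_≺([a_1,…,a_r | b_1,…,b_r]) · x_{α_{r+1} β_{r+1}} ⋯ x_{α_s β_s}. -/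
open MvPolynomial

/-- The set `D` of diagonal variables `x_{ii}` (0-indexed). -/
def Dset (n : ℕ) : Set (Sym2 (Fin n)) := {v | ∃ i : Fin n, v = s(i, i)}

/-- The set `U` of variables `x_{13}, x_{24}, …, x_{n-2,n}, x_{12}, x_{n-1,n}` (0-indexed). -/
def Uset (n : ℕ) : Set (Sym2 (Fin n)) :=
  {v | ∃ i j : Fin n, v = s(i, j) ∧
    ((j : ℕ) = (i : ℕ) + 2 ∨ ((i : ℕ) = 0 ∧ (j : ℕ) = 1) ∨
      ((i : ℕ) = n - 2 ∧ (j : ℕ) = n - 1))}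

/-- `rank` encodes the linear order on the variables described in the paper:
`x_{11} ≻ … ≻ x_{nn} ≻ x_{13} ≻ … ≻ x_{n-2,n} ≻ x_{12} ≻ x_{n-1,n} ≻ (rest)`,
where a smaller rank means a larger variable. -/
def IsGoodRank (n : ℕ) (rank : Sym2 (Fin n) → ℕ) : Prop :=
  Function.Injective rank ∧
  (∀ i : Fin n, rank s(i, i) = (i : ℕ)) ∧
  (∀ i j : Fin n, (j : ℕ) = (i : ℕ) + 2 → rank s(i, j) = n + (i : ℕ)) ∧
  (∀ i j : Fin n, (i : ℕ) = 0 → (j : ℕ) = 1 → rank s(i, j) = 2 * n - 2) ∧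
  (∀ i j : Fin n, (i : ℕ) = n - 2 → (j : ℕ) = n - 1 → rank s(i, j) = 2 * n - 1) ∧
  (∀ v : Sym2 (Fin n), v ∉ Dset n ∪ Uset n → 2 * n ≤ rank v)

/-- The degree reverse lexicographic order on exponent vectors induced by `rank`:
`a ≺ b` iff `deg a < deg b`, or the degrees agree and at the `rank`-largest (i.e. smallest)
variable where `a` and `b` differ, `a` has the larger exponent. -/
def DegRevLexLT {n : ℕ} (rank : Sym2 (Fin n) → ℕ) (a b : Sym2 (Fin n) →₀ ℕ) : Prop :=
  (a.sum fun _ e => e) < (b.sum fun _ e => e) ∨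
    ((a.sum fun _ e => e) = (b.sum fun _ e => e) ∧
      ∃ v : Sym2 (Fin n), b v < a v ∧ ∀ w : Sym2 (Fin n), rank v < rank w → a w = b w)

/-- `μ` is the leading monomial (exponent vector) of `f` w.r.t. the degrevlex order `≺`. -/
def IsLeadingMonomial {K : Type*} [Field K] {n : ℕ} (rank : Sym2 (Fin n) → ℕ)
    (f : MvPolynomial (Sym2 (Fin n)) K) (μ : Sym2 (Fin n) →₀ ℕ) : Prop :=
  μ ∈ f.support ∧ ∀ ν ∈ f.support, ν ≠ μ → DegRevLexLT rank ν μ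

/-- The minor `[a_1,…,a_s | b_1,…,b_s]` of the generic symmetric matrix `X = (x_{ij})`. -/
noncomputable def symMinor (K : Type*) [Field K] {n s : ℕ} (a b : Fin s → Fin n) :
    MvPolynomial (Sym2 (Fin n)) K :=
  Matrix.det (Matrix.of fun k l => (MvPolynomial.X s(a k, b l) : MvPolynomial (Sym2 (Fin n)) K))

open Classical in
/-- kill the variables outside `G` -/
noncomputable def killVars {σ K : Type*} [Field K] (G : Set σ) :
    MvPolynomial σ K →ₐ[K] MvPolynomial σ K :=
  MvPolynomial.aeval (fun v => if v ∈ G then MvPolynomial.X v else 0)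

open Classical in
lemma killVars_X {σ K : Type*} [Field K] (G : Set σ) (v : σ) :
    killVars (K := K) G (X v) = if v ∈ G then MvPolynomial.X v else 0 := by
  simp [killVars]

open Classical in
lemma killVars_monomial {σ K : Type*} [Field K] (G : Set σ) (d : σ →₀ ℕ) (c : K) :
    killVars G (monomial d c) = if (↑d.support ⊆ G) then monomial d c else 0 := by
  rw [killVars, aeval_monomial]
  split_ifs with h
  · rw [monomial_eq, MvPolynomial.algebraMap_eq]
    congr 1
    refine Finset.prod_congr rfl fun v hv => ?_
    have hvG : v ∈ G := h hv
    simp [hvG]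
  · obtain ⟨v, hv, hvG⟩ := Set.not_subset.mp h
    have : (d.prod fun i k => (if i ∈ G then (X i : MvPolynomial σ K) else 0) ^ k) = 0 := by
      refine Finset.prod_eq_zero (i := v) hv ?_
      simp only [if_neg hvG]
      exact zero_pow (Finsupp.mem_support_iff.mp hv)
    rw [this, mul_zero]

lemma coeff_killVars {σ K : Type*} [Field K] (G : Set σ) (f : MvPolynomial σ K) (d : σ →₀ ℕ)
    (hd : ↑d.support ⊆ G) : coeff d (killVars G f) = coeff d f := by
  classical
  induction f using MvPolynomial.induction_on' with
  | monomial u a =>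
    rw [killVars_monomial]
    split_ifs with h
    · rfl
    · rw [coeff_monomial, if_neg, coeff_zero]
      rintro rfl
      exact h hd
  | add p q hp hq => rw [map_add, coeff_add, coeff_add, hp, hq]

lemma symMinor_homog {K : Type*} [Field K] {n s : ℕ} (A B : Fin s → Fin n) :
    (symMinor K A B).IsHomogeneous s := by
  rw [symMinor, Matrix.det_apply']
  refine IsHomogeneous.sum _ _ _ fun σ _ => ?_
  have h := IsHomogeneous.prod (R := K) (Finset.univ : Finset (Fin s))
    (fun i => (X s(A (σ i), B i) : MvPolynomial (Sym2 (Fin n)) K)) (fun _ => 1)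
    (fun i _ => isHomogeneous_X _ _)
  have h2 : (((Equiv.Perm.sign σ : ℤ) : MvPolynomial (Sym2 (Fin n)) K)).IsHomogeneous 0 := by
    have := isHomogeneous_C (Sym2 (Fin n)) ((Equiv.Perm.sign σ : ℤ) : K)
    simpa using this
  simpa using h2.mul h

lemma symMinor_degree {K : Type*} [Field K] {n s : ℕ} (A B : Fin s → Fin n)
    (ν : Sym2 (Fin n) →₀ ℕ) (h : ν ∈ (symMinor K A B).support) :
    (ν.sum fun _ e => e) = s := by
  have := symMinor_homog A B (mem_support_iff.mp h)
  rw [← this, Finsupp.weight_apply]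
  simp [Finsupp.sum]

lemma killVars_det {K : Type*} [Field K] {n r t : ℕ} (G : Set (Sym2 (Fin n)))
    (A B : Fin (r + t) → Fin n)
    (h1 : ∀ j : Fin t, s(A (Fin.natAdd r j), B (Fin.natAdd r j)) ∈ G)
    (h2 : ∀ (i : Fin r) (j : Fin t), s(A (Fin.castAdd t i), B (Fin.natAdd r j)) ∉ G)
    (h3 : ∀ i j : Fin t, i < j → s(A (Fin.natAdd r i), B (Fin.natAdd r j)) ∉ G) :
    killVars G (symMinor K A B) =
      killVars G (symMinor K (fun k => A (Fin.castAdd t k)) (fun k => B (Fin.castAdd t k))) *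
        monomial (∑ j : Fin t, Finsupp.single s(A (Fin.natAdd r j), B (Fin.natAdd r j)) 1) 1 := by
  classical
  rw [symMinor, symMinor, AlgHom.map_det, AlgHom.map_det, monomial_sum_one,
    ← Matrix.det_submatrix_equiv_self finSumFinEquiv]
  rw [← Matrix.fromBlocks_toBlocks (Matrix.submatrix _ _ _)]
  rw [(_ : Matrix.toBlocks₁₂ _ = 0), Matrix.det_fromBlocks_zero₁₂]
  · congr 1
    rw [Matrix.det_of_isLowerTriangular]
    · refine Finset.prod_congr rfl fun j _ => ?_
      simp only [Matrix.toBlocks₂₂]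
      simp [killVars_X, h1]
      rfl
    · intro i j hij
      have := h3 i j (by simpa using hij)
      simp [Matrix.toBlocks₂₂, killVars_X, this]
  · ext1 i j
    simp [Matrix.toBlocks₁₂, killVars_X, h2]

lemma degRevLexLT_add {n : ℕ} (rank : Sym2 (Fin n) → ℕ) (a b c : Sym2 (Fin n) →₀ ℕ)
    (h : DegRevLexLT rank a b) : DegRevLexLT rank (a + c) (b + c) := by
  have e : ∀ a : Sym2 (Fin n) →₀ ℕ, ((a + c).sum fun _ e => e) =
      (a.sum fun _ e => e) + c.sum fun _ e => e := fun a =>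
    Finsupp.sum_add_index' (fun _ => rfl) (fun _ _ _ => rfl)
  rw [DegRevLexLT, e, e]
  rcases h with h | ⟨h, v, hv, hw⟩
  · left; omega
  · right
    refine ⟨by omega, v, by simpa using hv, fun w hvw => by simp [hw w hvw]⟩

lemma degRevLexLT_of_bad {n : ℕ} (rank : Sym2 (Fin n) → ℕ) (G : Set (Sym2 (Fin n))) (N : ℕ)
    (hG : ∀ v, v ∈ G → rank v < N) (hG' : ∀ v, v ∉ G → N ≤ rank v)
    (a b : Sym2 (Fin n) →₀ ℕ) (hdeg : (a.sum fun _ e => e) = (b.sum fun _ e => e))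
    (hb : ↑b.support ⊆ G) (ha : ¬ ↑a.support ⊆ G) : DegRevLexLT rank a b := by
  classical
  right
  refine ⟨hdeg, ?_⟩
  have hb0 : ∀ v, v ∉ G → b v = 0 := fun v hv => by
    by_contra h
    exact hv (hb (Finsupp.mem_support_iff.mpr h))
  obtain ⟨v0, hv0, hv0G⟩ := Set.not_subset.mp ha
  obtain ⟨v, hv, hmax⟩ := Finset.exists_max_image (a.support.filter (fun v => v ∉ G)) rank
    ⟨v0, Finset.mem_filter.mpr ⟨hv0, hv0G⟩⟩
  obtain ⟨hva, hvG⟩ := Finset.mem_filter.mp hv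
  refine ⟨v, ?_, fun w hw => ?_⟩
  · rw [hb0 v hvG]
    exact Nat.pos_of_ne_zero (Finsupp.mem_support_iff.mp hva)
  · have hwG : w ∉ G := fun h => by
      have := hG w h
      have := hG' v hvG
      omega
    rw [hb0 w hwG]
    by_contra h
    have := hmax w (Finset.mem_filter.mpr ⟨Finsupp.mem_support_iff.mpr h, hwG⟩)
    omega

/-- **Lemma 3.2.** (Indices are 0-based: the first `r` positions carry the sequences
`a_1,…,a_r` and `b_1,…,b_r`, the remaining positions carry `α_{r+1},…,α_s` and
`β_{r+1},…,β_s`.) Under the stated hypotheses,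
`in_≺ [a_1,…,a_r,α_{r+1},…,α_s | b_1,…,b_r,β_{r+1},…,β_s]
  = in_≺ [a_1,…,a_r | b_1,…,b_r] · x_{α_{r+1} β_{r+1}} ⋯ x_{α_s β_s}`. -/
theorem stmt1 {K : Type*} [Field K] (n r s : ℕ) (hr : 1 ≤ r) (hrs : r ≤ s) (hs : s ≤ n - 2)
    (rank : Sym2 (Fin n) → ℕ) (hrank : IsGoodRank n rank)
    (A B : Fin s → Fin n) (hA : Function.Injective A) (hB : Function.Injective B)
    (h1 : ∀ ℓ : Fin s, r ≤ (ℓ : ℕ) → s(A ℓ, B ℓ) ∈ Uset n)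
    (h2 : ∀ i j : Fin s, (i : ℕ) < r → r ≤ (j : ℕ) →
      A i < B j ∧ s(A i, B j) ∉ Dset n ∪ Uset n)
    (h3 : ∀ i j : Fin s, r ≤ (i : ℕ) → i < j → s(A i, B j) ∉ Dset n ∪ Uset n)
    (μ : Sym2 (Fin n) →₀ ℕ)
    (hμ : IsLeadingMonomial rank
      (symMinor K (fun k : Fin r => A (Fin.castLE hrs k)) (fun k : Fin r => B (Fin.castLE hrs k))) μ)
    (hμU : ↑μ.support ⊆ Uset n) :
    IsLeadingMonomial rank (symMinor K A B)
      (μ + ∑ ℓ ∈ Finset.univ.filter (fun ℓ : Fin s => r ≤ (ℓ : ℕ)),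
        Finsupp.single s(A ℓ, B ℓ) 1) := by
  obtain ⟨t, rfl⟩ := Nat.exists_eq_add_of_le hrs
  set G := Dset n ∪ Uset n with hGdef
  obtain ⟨hinj, hd, hu, h12, hnn, hbad⟩ := hrank
  have hn : 3 ≤ n := by omega
  have hGr : ∀ v, v ∈ G → rank v < 2 * n := by
    rintro v (⟨i, rfl⟩ | ⟨i, j, rfl, h | ⟨hi, hj⟩ | ⟨hi, hj⟩⟩)
    · rw [hd]; omega
    · rw [hu i j h]; omega
    · rw [h12 i j hi hj]; omega
    · rw [hnn i j hi hj]; omega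
  set δ : Sym2 (Fin n) →₀ ℕ :=
    ∑ j : Fin t, Finsupp.single s(A (Fin.natAdd r j), B (Fin.natAdd r j)) 1 with hδ
  have hsum : (∑ ℓ ∈ Finset.univ.filter (fun ℓ : Fin (r + t) => r ≤ (ℓ : ℕ)),
        Finsupp.single s(A ℓ, B ℓ) 1) = δ := by
    rw [Finset.sum_filter, Fin.sum_univ_add]
    simp [hδ]
  rw [hsum]
  have h1' : ∀ j : Fin t, s(A (Fin.natAdd r j), B (Fin.natAdd r j)) ∈ G :=
    fun j => Or.inr (h1 _ (by simp))
  have hdet := killVars_det (K := K) G A B h1'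
    (fun i j => (h2 _ _ (by simp) (by simp)).2)
    (fun i j hij => h3 _ _ (by simp) (by simpa using hij))
  rw [← hδ] at hdet
  set P := symMinor K (fun k => A (Fin.castAdd t k)) (fun k => B (Fin.castAdd t k)) with hP
  change IsLeadingMonomial rank P μ at hμ
  obtain ⟨hμ1, hμ2⟩ := hμ
  have hδG : ∀ v, v ∉ G → δ v = 0 := by
    intro v hv
    rw [hδ, Finsupp.finsetSum_apply]
    refine Finset.sum_eq_zero fun j _ => ?_
    rw [Finsupp.single_apply, if_neg]
    rintro rfl
    exact hv (h1' j)
  have hmG : ↑(μ + δ).support ⊆ G := by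
    intro v hv
    by_contra hvG
    have h0 : μ v = 0 := by
      by_contra h
      exact hvG (Or.inr (hμU (Finsupp.mem_support_iff.mpr h)))
    apply Finsupp.mem_support_iff.mp hv
    rw [Finsupp.add_apply, h0, hδG v hvG, add_zero]
  have hμG : ↑μ.support ⊆ G := fun v hv => Or.inr (hμU hv)
  have hmem : μ + δ ∈ (symMinor K A B).support := by
    rw [mem_support_iff, ← coeff_killVars G _ _ hmG, hdet, coeff_mul_monomial, mul_one,
      coeff_killVars G _ _ hμG]
    exact mem_support_iff.mp hμ1
  refine ⟨hmem, fun ν hν hne => ?_⟩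
  by_cases hνG : ↑ν.support ⊆ G
  · have hc := mem_support_iff.mp hν
    rw [← coeff_killVars G _ _ hνG, hdet, coeff_mul_monomial'] at hc
    split_ifs at hc with hle
    · have hνeq : ν = (ν - δ) + δ := (tsub_add_cancel_of_le hle).symm
      have hsub : ↑(ν - δ).support ⊆ G := by
        intro v hv
        apply hνG
        have := Finsupp.mem_support_iff.mp hv
        rw [Finsupp.tsub_apply] at this
        refine Finsupp.mem_support_iff.mpr ?_
        omega
      rw [mul_one, coeff_killVars G _ _ hsub] at hc
      rw [hνeq]
      refine degRevLexLT_add rank _ _ _ (hμ2 _ (mem_support_iff.mpr hc) ?_)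
      intro h
      exact hne (by rw [hνeq, h])
    · exact absurd rfl hc
  · exact degRevLexLT_of_bad rank G (2 * n) hGr hbad _ _
      ((symMinor_degree A B ν hν).trans (symMinor_degree A B _ hmem).symm) hmG hνG
end

section
/- Let 1 ≤ s ≤ n-2 and let m be a squarefree monomial of degree s all of whose variables lie in D ∪ U, such that for every diagonal variable x_{ii} dividing m and every variable x_{hk} ∈ U dividing m one has i ≠ h and i ≠ k. Then m is the leading monomial, with respect to ≺, of some s×s minor of X; that is, there exist sequences a_1,…,a_s and b_1,…,b_s of indices in {1,…,n}, the a's pairwise distinct and the b's pairwise distinct, with in_≺([a_1,…,a_s | b_1,…,b_s]) = m. -/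
open MvPolynomial

/-- Combinatorial core: a flow argument on the cycle `ZMod n`. -/
theorem comb_core (n s : ℕ) (hn : 3 ≤ n) (R C : Fin s → ZMod n)
    (hR : Function.Injective R) (hC : Function.Injective C)
    (htype : ∀ k, C k = R k ∨ C k = R k + 1 ∨ R k = C k + 1)
    (hcoh : ∀ k k', R k = C k' → C k = R k' → R k = C k)
    (p q : ZMod n)
    (hp : (∃ k, R k = p ∧ C k = p + 1) ∨ (∀ k, R k ≠ p ∧ C k ≠ p))
    (hq : (∃ k, R k = q + 1 ∧ C k = q) ∨ (∀ k, R k ≠ q ∧ C k ≠ q))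
    (τ : Equiv.Perm (Fin s))
    (hτ : ∀ k, C k = R (τ k) ∨ C k = R (τ k) + 1 ∨ R (τ k) = C k + 1) :
    ∀ k, C k ≠ R k → τ k = k := by
  have : NeZero n := ⟨by omega⟩
  have : Fact (1 < n) := ⟨by omega⟩
  have h1 : (1 : ZMod n) ≠ 0 := one_ne_zero
  have h2 : (1 : ZMod n) + 1 ≠ 0 := by
    intro h
    have h' : ((2 : ℕ) : ZMod n) = 0 := by push_cast; rw [← one_add_one_eq_two]; exact h
    rw [ZMod.natCast_eq_zero_iff] at h'
    have := Nat.le_of_dvd (by norm_num) h'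
    omega
  let P : Equiv.Perm (Fin s) → ZMod n → ℤ := fun σ i =>
    ∑ k, (if R (σ k) = i ∧ C k = i + 1 then (1 : ℤ) else 0)
  let Q : Equiv.Perm (Fin s) → ZMod n → ℤ := fun σ i =>
    ∑ k, (if R (σ k) = i + 1 ∧ C k = i then (1 : ℤ) else 0)
  have hsum01 : ∀ (p : Fin s → Prop) [DecidablePred p], (∀ k k', p k → p k' → k = k') →
      (∑ k, (if p k then (1 : ℤ) else 0)) ≤ 1 := by
    intro p _ h
    rw [Finset.sum_boole]
    have : (Finset.univ.filter p).card ≤ 1 := by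
      rw [Finset.card_le_one]
      intro a ha b hb
      simp at ha hb
      exact h a b ha hb
    exact_mod_cast this
  have hsum0 : ∀ (p : Fin s → Prop) [DecidablePred p],
      0 ≤ (∑ k, (if p k then (1 : ℤ) else 0)) := by
    intro p _
    rw [Finset.sum_boole]; positivity
  have hpos : ∀ (p : Fin s → Prop) [DecidablePred p],
      0 < (∑ k, (if p k then (1 : ℤ) else 0)) ↔ ∃ k, p k := by
    intro p _
    rw [Finset.sum_boole]
    simp [Finset.card_pos, Finset.Nonempty]
  have hP1 : ∀ σ i, P σ i ≤ 1 := fun σ i => hsum01 _ (fun k k' h h' => hC (h.2.trans h'.2.symm))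
  have hQ1 : ∀ σ i, Q σ i ≤ 1 := fun σ i => hsum01 _ (fun k k' h h' => hC (h.2.trans h'.2.symm))
  have hP0 : ∀ σ i, 0 ≤ P σ i := fun σ i => hsum0 _
  have hQ0 : ∀ σ i, 0 ≤ Q σ i := fun σ i => hsum0 _
  have hPp : ∀ σ i, 0 < P σ i ↔ ∃ k, R (σ k) = i ∧ C k = i + 1 := fun σ i => hpos _
  have hQp : ∀ σ i, 0 < Q σ i ↔ ∃ k, R (σ k) = i + 1 ∧ C k = i := fun σ i => hpos _
  have hcons : ∀ σ : Equiv.Perm (Fin s),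
      (∀ k, C k = R (σ k) ∨ C k = R (σ k) + 1 ∨ R (σ k) = C k + 1) → ∀ i,
      (P σ (i+1) - Q σ (i+1)) - (P σ i - Q σ i) =
        (∑ k, (if R k = i + 1 then (1 : ℤ) else 0)) - ∑ k, (if C k = i + 1 then (1 : ℤ) else 0) := by
    intro σ hσ i
    rw [← Equiv.sum_comp σ (fun k => if R k = i + 1 then (1 : ℤ) else 0)]
    simp only [P, Q, ← Finset.sum_sub_distrib]
    refine Finset.sum_congr rfl fun k _ => ?_
    have key : ∀ r c : ZMod n, (c = r ∨ c = r + 1 ∨ r = c + 1) →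
      ((if r = i + 1 ∧ c = i + 1 + 1 then (1 : ℤ) else 0) -
       (if r = i + 1 + 1 ∧ c = i + 1 then (1 : ℤ) else 0)) -
       ((if r = i ∧ c = i + 1 then (1 : ℤ) else 0) -
       (if r = i + 1 ∧ c = i then (1 : ℤ) else 0)) =
       (if r = i + 1 then (1 : ℤ) else 0) - (if c = i + 1 then (1 : ℤ) else 0) := by
      have e1 : ∀ x : ZMod n, x + 1 ≠ x := fun x h => h1 (by simpa using h)
      have e2 : ∀ x : ZMod n, x + 1 + 1 ≠ x := fun x h => h2 (by
        rw [add_assoc] at h; simpa using h)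
      have e3 : ∀ x : ZMod n, x ≠ x + 1 := fun x h => e1 x h.symm
      have e4 : ∀ x : ZMod n, x ≠ x + 1 + 1 := fun x h => e2 x h.symm
      rintro r c (rfl | rfl | rfl)
      · by_cases ha : c = i + 1
        · subst ha; simp [e1, e2, e3, e4]
        · by_cases hb : c = i
          · subst hb; simp [e1, e2, e3, e4]
          · simp [ha, hb]
      · by_cases ha : r = i + 1
        · subst ha; simp [e1, e2, e3, e4]
        · by_cases hb : r = i
          · subst hb; simp [e1, e2, e3, e4]
          · have : ¬ (r = i + 1 + 1 ∧ r = i) := fun h => hb h.2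
            simp [ha, hb]
      · by_cases ha : c = i + 1
        · subst ha; simp [e1, e2, e3, e4]
        · by_cases hb : c = i
          · subst hb; simp [e1, e2, e3, e4]
          · simp [ha, hb]
    exact key _ _ (hσ k)
  have hconst : ∀ i, (P τ i - Q τ i) - (P 1 i - Q 1 i) = (P τ 0 - Q τ 0) - (P 1 0 - Q 1 0) := by
    have step : ∀ i, (P τ (i+1) - Q τ (i+1)) - (P 1 (i+1) - Q 1 (i+1)) =
        (P τ i - Q τ i) - (P 1 i - Q 1 i) := by
      intro i
      have a := hcons τ hτ i
      have b := hcons 1 (by simpa using htype) i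
      linarith
    have nat : ∀ k : ℕ, (P τ (k : ZMod n) - Q τ (k : ZMod n)) - (P 1 (k : ZMod n) - Q 1 (k : ZMod n))
        = (P τ 0 - Q τ 0) - (P 1 0 - Q 1 0) := by
      intro k
      induction k with
      | zero => simp
      | succ k ih => rw [Nat.cast_succ, step, ih]
    intro i
    have := nat i.val
    rwa [ZMod.natCast_zmod_val] at this
  -- values of the reference flow
  have hne : ∀ x : ZMod n, x ≠ x + 1 := fun x h => h1 (by simpa using h.symm)
  have refP : ∀ i k, R k = i → C k = i + 1 → P 1 i = 1 ∧ Q 1 i = 0 := by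
    intro i k hk hk'
    have a : 0 < P 1 i := (hPp 1 i).2 ⟨k, by simpa using hk, hk'⟩
    have b : ¬ 0 < Q 1 i := by
      rw [hQp]
      rintro ⟨k', h, h'⟩
      simp only [Equiv.Perm.coe_one, id] at h
      have := hcoh k k' (hk.trans h'.symm) (hk'.trans h.symm)
      rw [hk, hk'] at this
      exact hne _ this
    have := hP1 1 i; have := hQ0 1 i
    omega
  have refQ : ∀ i k, R k = i + 1 → C k = i → Q 1 i = 1 ∧ P 1 i = 0 := by
    intro i k hk hk'
    have a : 0 < Q 1 i := (hQp 1 i).2 ⟨k, by simpa using hk, hk'⟩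
    have b : ¬ 0 < P 1 i := by
      rw [hPp]
      rintro ⟨k', h, h'⟩
      simp only [Equiv.Perm.coe_one, id] at h
      have := hcoh k k' (hk.trans h'.symm) (hk'.trans h.symm)
      rw [hk, hk'] at this
      exact hne _ this.symm
    have := hQ1 1 i; have := hP0 1 i
    omega
  have unt : ∀ i, (∀ k, R k ≠ i ∧ C k ≠ i) → ∀ σ, P σ i = 0 ∧ Q σ i = 0 := by
    intro i h σ
    have a : ¬ 0 < P σ i := by
      rw [hPp]; rintro ⟨k, h', _⟩; exact (h _).1 h'
    have b : ¬ 0 < Q σ i := by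
      rw [hQp]; rintro ⟨k, _, h'⟩; exact (h _).2 h'
    have := hP0 σ i; have := hQ0 σ i
    omega
  have dle : (P τ 0 - Q τ 0) - (P 1 0 - Q 1 0) ≤ 0 := by
    rw [← hconst p]
    rcases hp with ⟨k, hk, hk'⟩ | hp
    · have := refP p k hk hk'; have := hP1 τ p; have := hQ0 τ p; omega
    · have := unt p hp τ; have := unt p hp 1; omega
  have dge : 0 ≤ (P τ 0 - Q τ 0) - (P 1 0 - Q 1 0) := by
    rw [← hconst q]
    rcases hq with ⟨k, hk, hk'⟩ | hq
    · have := refQ q k hk hk'; have := hQ1 τ q; have := hP0 τ q; omega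
    · have := unt q hq τ; have := unt q hq 1; omega
  intro k hk
  rcases htype k with h | h | h
  · exact absurd h hk
  · have a := refP (R k) k rfl h
    have b := hconst (R k)
    have : 0 < P τ (R k) := by have := hQ0 τ (R k); omega
    obtain ⟨k', h', h''⟩ := (hPp _ _).1 this
    have : k' = k := hC (h''.trans h.symm)
    subst this
    exact hR h'
  · have a := refQ (C k) k h rfl
    have b := hconst (C k)
    have : 0 < Q τ (C k) := by have := hP0 τ (C k); omega
    obtain ⟨k', h', h''⟩ := (hQp _ _).1 this
    have : k' = k := hC h''
    subst this
    exact hR (h'.trans h.symm)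

theorem val_succ (n : ℕ) (hn : 3 ≤ n) (i : ZMod n) :
    (i + 1).val = if i.val + 1 = n then 0 else i.val + 1 := by
  have : NeZero n := ⟨by omega⟩
  have : Fact (1 < n) := ⟨by omega⟩
  have hi := ZMod.val_lt i
  rw [ZMod.val_add, ZMod.val_one]
  split_ifs with h
  · rw [h, Nat.mod_self]
  · exact Nat.mod_eq_of_lt (by omega)

/-- Position on the cycle to vertex. -/
def phi (n : ℕ) (hn : 3 ≤ n) (x : ZMod n) : Fin n :=
  ⟨if 2 * x.val < n then 2 * x.val else 2 * (n - 1 - x.val) + 1, by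
    have : NeZero n := ⟨by omega⟩
    have := ZMod.val_lt x
    split_ifs <;> omega⟩

theorem phi_inj (n : ℕ) (hn : 3 ≤ n) : Function.Injective (phi n hn) := by
  have : NeZero n := ⟨by omega⟩
  intro x y h
  have hx := ZMod.val_lt x
  have hy := ZMod.val_lt y
  simp only [phi, Fin.mk.injEq] at h
  apply ZMod.val_injective
  split_ifs at h <;> omega

theorem phi_surj (n : ℕ) (hn : 3 ≤ n) (v : Fin n) : ∃ x, phi n hn x = v := by
  have : NeZero n := ⟨by omega⟩
  have : Fintype.card (ZMod n) = Fintype.card (Fin n) := by simp [ZMod.card]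
  exact ((Fintype.bijective_iff_injective_and_card _).2 ⟨phi_inj n hn, this⟩).2 v

theorem U_char (n : ℕ) (hn : 3 ≤ n) (e : Sym2 (Fin n)) :
    e ∈ Uset n ↔ ∃ i : ZMod n, e = s(phi n hn i, phi n hn (i + 1)) := by
  have : NeZero n := ⟨by omega⟩
  constructor
  · rintro ⟨i, j, rfl, h⟩
    obtain ⟨x, rfl⟩ := phi_surj n hn i
    obtain ⟨y, rfl⟩ := phi_surj n hn j
    have hx := ZMod.val_lt x
    have hy := ZMod.val_lt y
    have sx := val_succ n hn x
    have sy := val_succ n hn y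
    have : y.val = (x + 1).val ∨ x.val = (y + 1).val := by
      have px : (phi n hn x : ℕ) =
        if 2 * x.val < n then 2 * x.val else 2 * (n - 1 - x.val) + 1 := rfl
      have py : (phi n hn y : ℕ) =
        if 2 * y.val < n then 2 * y.val else 2 * (n - 1 - y.val) + 1 := rfl
      split_ifs at px py sx sy <;> omega
    rcases this with h | h
    · exact ⟨x, by rw [ZMod.val_injective n h]⟩
    · exact ⟨y, by rw [ZMod.val_injective n h, Sym2.eq_swap]⟩
  · rintro ⟨x, rfl⟩
    have hx := ZMod.val_lt x
    have sx := val_succ n hn x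
    have : ((phi n hn (x+1) : ℕ) = (phi n hn x : ℕ) + 2 ∨
      ((phi n hn x : ℕ) = 0 ∧ (phi n hn (x+1) : ℕ) = 1) ∨
      ((phi n hn x : ℕ) = n - 2 ∧ (phi n hn (x+1) : ℕ) = n - 1)) ∨
      ((phi n hn x : ℕ) = (phi n hn (x+1) : ℕ) + 2 ∨
      ((phi n hn (x+1) : ℕ) = 0 ∧ (phi n hn x : ℕ) = 1) ∨
      ((phi n hn (x+1) : ℕ) = n - 2 ∧ (phi n hn x : ℕ) = n - 1)) := by
      simp only [phi]
      rw [sx]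
      split_ifs <;> omega
    rcases this with h | h
    · exact ⟨_, _, rfl, h⟩
    · exact ⟨_, _, Sym2.eq_swap, h⟩

theorem drl_of (n : ℕ) (rank : Sym2 (Fin n) → ℕ) (hinj : Function.Injective rank)
    (ν μ : Sym2 (Fin n) →₀ ℕ) (hdeg : (ν.sum fun _ e => e) = (μ.sum fun _ e => e))
    (c : ℕ) (hle : ∀ v, c ≤ rank v → μ v ≤ ν v) (hlt : ∃ v, c ≤ rank v ∧ μ v < ν v) :
    DegRevLexLT rank ν μ := by
  right
  refine ⟨hdeg, ?_⟩
  obtain ⟨v0, hv0, hv0'⟩ := hlt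
  obtain ⟨v, hv, hmax⟩ := Finset.exists_max_image
    (Finset.univ.filter fun v => c ≤ rank v ∧ μ v < ν v) rank ⟨v0, by simp [hv0, hv0']⟩
  simp only [Finset.mem_filter, Finset.mem_univ, true_and] at hv hmax
  refine ⟨v, hv.2, fun w hw => ?_⟩
  by_contra hne
  have h1 := hle w (by omega)
  have := hmax w ⟨by omega, by omega⟩
  omega

theorem drl_irrefl (n : ℕ) (rank : Sym2 (Fin n) → ℕ) (ν : Sym2 (Fin n) →₀ ℕ) :
    ¬ DegRevLexLT rank ν ν := by
  rintro (h | ⟨_, v, h, _⟩)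
  · exact lt_irrefl _ h
  · exact lt_irrefl _ h

theorem minor_expand (K : Type*) [Field K] {n s : ℕ} (a b : Fin s → Fin n) :
    symMinor K a b = ∑ τ : Equiv.Perm (Fin s),
      MvPolynomial.monomial (∑ k, Finsupp.single s(a (τ k), b k) 1)
        ((Equiv.Perm.sign τ : ℤ) : K) := by
  unfold symMinor
  rw [Matrix.det_apply']
  refine Finset.sum_congr rfl fun τ _ => ?_
  simp only [Matrix.of_apply]
  rw [← mul_one ((Equiv.Perm.sign τ : ℤ) : K), ← MvPolynomial.C_mul_monomial]
  rw [MvPolynomial.monomial_sum_one]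
  simp [MvPolynomial.X]

theorem lead_of (K : Type*) [Field K] {n s : ℕ} (rank : Sym2 (Fin n) → ℕ) (a b : Fin s → Fin n)
    (μ : Sym2 (Fin n) →₀ ℕ) (hμ : (∑ k, Finsupp.single s(a k, b k) 1) = μ)
    (h : ∀ τ : Equiv.Perm (Fin s), τ ≠ 1 →
      DegRevLexLT rank (∑ k, Finsupp.single s(a (τ k), b k) 1) μ) :
    IsLeadingMonomial rank (symMinor K a b) μ := by
  classical
  rw [minor_expand]
  constructor
  · rw [MvPolynomial.mem_support_iff, MvPolynomial.coeff_sum, Finset.sum_eq_single 1]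
    · simp [hμ]
    · intro τ _ hτ
      rw [MvPolynomial.coeff_monomial, if_neg]
      intro he
      have := h τ hτ
      rw [he] at this
      exact drl_irrefl n rank _ this
    · simp
  · intro ν hν hne
    have := MvPolynomial.support_sum hν
    simp only [Finset.mem_biUnion, Finset.mem_univ, true_and] at this
    obtain ⟨τ, hτ⟩ := this
    have := MvPolynomial.support_monomial_subset hτ
    rw [Finset.mem_singleton] at this
    subst this
    apply h
    rintro rfl
    exact hne (by simpa using hμ)

theorem deg_sum_single {n s : ℕ} (f : Fin s → Sym2 (Fin n)) :
    ((∑ k, Finsupp.single (f k) 1 : Sym2 (Fin n) →₀ ℕ).sum fun _ e => e) = s := by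
  rw [← Finsupp.sum_finsetSum_index (by simp) (by simp)]
  simp

/-- **Proposition 3.7.** A squarefree monomial of degree `s` (encoded by its support,
a finset `m` of variables of cardinality `s`) all of whose variables lie in `D ∪ U`,
such that no diagonal variable `x_{ii}` dividing `m` shares the index `i` with a
row or column index of a variable of `U` dividing `m`, is the leading monomial of an
`s`-minor of the generic symmetric matrix `X`. -/
theorem stmt6 {K : Type*} [Field K] (n s : ℕ) (hs1 : 1 ≤ s) (hs2 : s ≤ n - 2)
    (rank : Sym2 (Fin n) → ℕ) (hrank : IsGoodRank n rank)
    (m : Finset (Sym2 (Fin n))) (hcard : m.card = s)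
    (hDU : ↑m ⊆ Dset n ∪ Uset n)
    (hsep : ∀ i j k : Fin n, s(i, i) ∈ m → s(j, k) ∈ m → s(j, k) ∈ Uset n →
      i ≠ j ∧ i ≠ k) :
    ∃ a b : Fin s → Fin n, Function.Injective a ∧ Function.Injective b ∧
      IsLeadingMonomial rank (symMinor K a b)
        (∑ v ∈ m, Finsupp.single v 1) := by
  classical
  have hn : 3 ≤ n := by omega
  have : NeZero n := ⟨by omega⟩
  have : Fact (1 < n) := ⟨by omega⟩
  obtain ⟨hinj, hrD, hrU1, hrU2, hrU3, hrO⟩ := hrank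
  have h1 : (1 : ZMod n) ≠ 0 := one_ne_zero
  have h2 : (1 : ZMod n) + 1 ≠ 0 := by
    intro h
    have h' : ((2 : ℕ) : ZMod n) = 0 := by push_cast; rw [← one_add_one_eq_two]; exact h
    rw [ZMod.natCast_eq_zero_iff] at h'
    have := Nat.le_of_dvd (by norm_num) h'
    omega
  have e1 : ∀ x : ZMod n, x + 1 ≠ x := fun x h => h1 (by simpa using h)
  have e2 : ∀ x : ZMod n, x + 1 + 1 ≠ x := fun x h => h2 (by
    rw [add_assoc] at h; simpa using h)
  have hφ := phi_inj n hn
  have hedge : ∀ i j : ZMod n, s(phi n hn i, phi n hn (i+1)) = s(phi n hn j, phi n hn (j+1)) →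
      i = j := by
    intro i j h
    rw [Sym2.eq_iff] at h
    rcases h with ⟨h, _⟩ | ⟨h, h'⟩
    · exact hφ h
    · have a := hφ h
      have b := hφ h'
      rw [a] at b
      exact absurd b (e2 j)
  have hrankD : ∀ v ∈ Dset n, rank v < n := by
    rintro v ⟨i, rfl⟩; rw [hrD]; exact i.2
  have hrankU : ∀ v ∈ Uset n, n ≤ rank v ∧ rank v < 2 * n := by
    rintro v ⟨i, j, rfl, h | ⟨h, h'⟩ | ⟨h, h'⟩⟩
    · rw [hrU1 i j h]; have := i.2; have := j.2; omega
    · rw [hrU2 i j h h']; omega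
    · rw [hrU3 i j h h']; omega
  let E : Finset (ZMod n) := Finset.univ.filter fun i => s(phi n hn i, phi n hn (i+1)) ∈ m
  let L : Finset (ZMod n) := Finset.univ.filter fun i => s(phi n hn i, phi n hn i) ∈ m
  have hE : ∀ i, i ∈ E ↔ s(phi n hn i, phi n hn (i+1)) ∈ m := by simp [E]
  have hL : ∀ i, i ∈ L ↔ s(phi n hn i, phi n hn i) ∈ m := by simp [L]
  have hsepE : ∀ i j, i ∈ L → j ∈ E → i ≠ j ∧ i ≠ j + 1 := by
    intro i j hi hj
    have := hsep _ _ _ ((hL i).1 hi) ((hE j).1 hj) ((U_char n hn _).2 ⟨j, rfl⟩)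
    exact ⟨fun h => this.1 (by rw [h]), fun h => this.2 (by rw [h])⟩
  have hEL : E.card + L.card ≤ s := by
    rw [← hcard]
    have a : (E.image fun i => s(phi n hn i, phi n hn (i+1))).card = E.card :=
      Finset.card_image_of_injective _ (fun i j h => hedge i j h)
    have b : (L.image fun i => s(phi n hn i, phi n hn i)).card = L.card := by
      apply Finset.card_image_of_injective
      intro i j h
      simp only [Sym2.eq_iff, or_self, and_self] at h
      exact hφ h
    rw [← a, ← b, ← Finset.card_union_of_disjoint]
    · apply Finset.card_le_card
      intro v hv
      rw [Finset.mem_union, Finset.mem_image, Finset.mem_image] at hv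
      rcases hv with ⟨i, hi, rfl⟩ | ⟨i, hi, rfl⟩
      · exact (hE i).1 hi
      · exact (hL i).1 hi
    · rw [Finset.disjoint_left]
      intro v hv hv'
      rw [Finset.mem_image] at hv hv'
      obtain ⟨i, hi, rfl⟩ := hv
      obtain ⟨j, hj, h⟩ := hv'
      rw [Sym2.eq_iff] at h
      rcases h with ⟨h, h'⟩ | ⟨h, h'⟩
      · exact e1 i (hφ (h'.symm.trans h))
      · exact e1 i (hφ (h.symm.trans h'))
  -- two starting vertices
  obtain ⟨p, q, hpE, hpL, hqE, hqL, hpq⟩ : ∃ p q : ZMod n,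
      (∀ i ∈ E, i + 1 ≠ p) ∧ p ∉ L ∧ (∀ i ∈ E, i + 1 ≠ q) ∧ q ∉ L ∧ p ≠ q := by
    have hc : 1 < (Finset.univ \ (E.image (· + 1) ∪ L) : Finset (ZMod n)).card := by
      have a := Finset.card_union_le (E.image (· + 1)) L
      have b : (E.image (· + 1)).card ≤ E.card := Finset.card_image_le
      have c := Finset.le_card_sdiff (E.image (· + 1) ∪ L) (Finset.univ : Finset (ZMod n))
      rw [Finset.card_univ, ZMod.card] at c
      omega
    obtain ⟨p, hp, q, hq, hne⟩ := Finset.one_lt_card.1 hc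
    simp only [Finset.mem_sdiff, Finset.mem_univ, true_and, Finset.mem_union, Finset.mem_image,
      not_or, not_exists, not_and] at hp hq
    exact ⟨p, q, hp.1, hp.2, hq.1, hq.2, hne⟩
  -- orientation
  let o : ZMod n → Prop := fun i => (i - p).val < (q - p).val
  have hop : o p := by
    simp only [o, sub_self, ZMod.val_zero]
    rw [Nat.pos_iff_ne_zero, Ne, ZMod.val_eq_zero, sub_eq_zero]
    exact fun h => hpq h.symm
  have hoq : ¬ o q := by simp [o]
  have hocoh : ∀ i, i ∈ E → i + 1 ∈ E → (o i ↔ o (i + 1)) := by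
    intro i hi _
    have hp' := hpE i hi
    have hq' := hqE i hi
    have a := val_succ n hn (i - p)
    rw [show i - p + 1 = i + 1 - p by ring] at a
    have b : (i + 1 - p).val ≠ 0 := by
      rw [Ne, ZMod.val_eq_zero, sub_eq_zero]; exact hp'
    have c : (i + 1 - p).val ≠ (q - p).val := by
      intro h
      have := ZMod.val_injective n h
      exact hq' (by simpa using this)
    simp only [o]
    split_ifs at a <;> omega
  -- choice of rows and columns
  have hch : ∀ v : m, ∃ rc : ZMod n × ZMod n, v.1 = s(phi n hn rc.1, phi n hn rc.2) ∧
      ((rc.2 = rc.1 ∧ rc.1 ∈ L) ∨ (rc.2 = rc.1 + 1 ∧ rc.1 ∈ E ∧ o rc.1) ∨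
       (rc.1 = rc.2 + 1 ∧ rc.2 ∈ E ∧ ¬ o rc.2)) := by
    rintro ⟨v, hv⟩
    rcases hDU hv with ⟨i, rfl⟩ | hU
    · obtain ⟨x, rfl⟩ := phi_surj n hn i
      exact ⟨(x, x), rfl, Or.inl ⟨rfl, (hL x).2 hv⟩⟩
    · obtain ⟨x, rfl⟩ := (U_char n hn _).1 hU
      by_cases ho : o x
      · exact ⟨(x, x+1), rfl, Or.inr (Or.inl ⟨rfl, (hE x).2 hv, ho⟩)⟩
      · exact ⟨(x+1, x), Sym2.eq_swap, Or.inr (Or.inr ⟨rfl, (hE x).2 hv, ho⟩)⟩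
  choose rc hrc hty using hch
  let eqv : Fin s ≃ m := (Finset.equivFinOfCardEq hcard).symm
  let R : Fin s → ZMod n := fun k => (rc (eqv k)).1
  let C : Fin s → ZMod n := fun k => (rc (eqv k)).2
  have hvk : ∀ k, (eqv k).1 = s(phi n hn (R k), phi n hn (C k)) := fun k => hrc _
  have hT : ∀ k, (C k = R k ∧ R k ∈ L) ∨ (C k = R k + 1 ∧ R k ∈ E ∧ o (R k)) ∨
       (R k = C k + 1 ∧ C k ∈ E ∧ ¬ o (C k)) := fun k => hty _
  have hRCinj : ∀ k k', R k = R k' → C k = C k' → k = k' := by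
    intro k k' h h'
    apply eqv.injective
    apply Subtype.ext
    rw [hvk, hvk, h, h']
  have hR : Function.Injective R := by
    intro k k' h
    apply hRCinj k k' h
    rcases hT k with ⟨a, b⟩ | ⟨a, b, c⟩ | ⟨a, b, c⟩ <;>
    rcases hT k' with ⟨a', b'⟩ | ⟨a', b', c'⟩ | ⟨a', b', c'⟩
    · rw [a, a', h]
    · exact absurd h (hsepE _ _ b b').1
    · exact absurd (h.trans a') (hsepE _ _ b b').2
    · exact absurd h.symm (hsepE _ _ b' b).1
    · rw [a, a', h]
    · exact absurd ((hocoh (C k') b' (by rw [← a', ← h]; exact b)).2 (by rw [← a', ← h]; exact c)) c'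
    · exact absurd (h.symm.trans a) (hsepE _ _ b' b).2
    · exact absurd ((hocoh (C k) b (by rw [← a, h]; exact b')).2 (by rw [← a, h]; exact c')) c
    · rw [a, a'] at h; exact add_right_cancel h
  have hC : Function.Injective C := by
    intro k k' h
    refine hRCinj k k' ?_ h
    rcases hT k with ⟨a, b⟩ | ⟨a, b, c⟩ | ⟨a, b, c⟩ <;>
    rcases hT k' with ⟨a', b'⟩ | ⟨a', b', c'⟩ | ⟨a', b', c'⟩
    · rw [← a, ← a', h]
    · exact absurd (a.symm.trans (h.trans a')) (hsepE _ _ b b').2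
    · exact absurd (a.symm.trans h) (hsepE _ _ b b').1
    · exact absurd (a'.symm.trans (h.symm.trans a)) (hsepE _ _ b' b).2
    · rw [a, a'] at h; exact add_right_cancel h
    · exact absurd ((hocoh (R k) b (by rw [← a, h]; exact b')).1 c) (by rw [← a, h]; exact c')
    · exact absurd (a'.symm.trans h.symm) (hsepE _ _ b' b).1
    · exact absurd ((hocoh (R k') b' (by rw [← a', ← h]; exact b)).1 c') (by rw [← a', ← h]; exact c)
    · rw [a, a', h]
  have hEk : ∀ i ∈ E, ∃ k, (o i → R k = i ∧ C k = i + 1) ∧ (¬ o i → R k = i + 1 ∧ C k = i) := by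
    intro i hi
    refine ⟨eqv.symm ⟨_, (hE i).1 hi⟩, ?_⟩
    set k := eqv.symm ⟨_, (hE i).1 hi⟩ with hk
    have hv := hvk k
    rw [hk, Equiv.apply_symm_apply, ← hk] at hv
    simp only at hv
    rcases hT k with ⟨a, b⟩ | ⟨a, b, c⟩ | ⟨a, b, c⟩
    · rw [a, Sym2.eq_iff] at hv
      rcases hv with ⟨h, h'⟩ | ⟨h, h'⟩ <;> exact absurd (hφ (h'.trans h.symm)) (e1 i)
    · rw [a] at hv
      have := hedge _ _ hv
      rw [← this] at a c
      exact ⟨fun _ => ⟨this.symm, a⟩, fun h => absurd c h⟩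
    · rw [a, Sym2.eq_swap (a := phi n hn (C k + 1))] at hv
      have := hedge _ _ hv
      rw [← this] at a c
      exact ⟨fun h => absurd h c, fun _ => ⟨a, this.symm⟩⟩
  have hunt : ∀ x, (∀ i ∈ E, i + 1 ≠ x) → x ∉ L → x ∉ E → ∀ k, R k ≠ x ∧ C k ≠ x := by
    intro x hx hxL hxE k
    rcases hT k with ⟨a, b⟩ | ⟨a, b, c⟩ | ⟨a, b, c⟩
    · rw [a]; exact ⟨fun h => hxL (h ▸ b), fun h => hxL (h ▸ b)⟩
    · rw [a]; exact ⟨fun h => hxE (h ▸ b), hx _ b⟩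
    · rw [a]; exact ⟨hx _ b, fun h => hxE (h ▸ b)⟩
  have core := comb_core n s hn R C hR hC
    (fun k => by rcases hT k with h | h | h
                 · exact Or.inl h.1
                 · exact Or.inr (Or.inl h.1)
                 · exact Or.inr (Or.inr h.1))
    (by
      intro k k' h h'
      have hkk : k = k' := by
        apply eqv.injective
        apply Subtype.ext
        rw [hvk, hvk, h, h', Sym2.eq_swap]
      rw [← hkk] at h
      exact h)
    p q
    (by
      by_cases hh : p ∈ E
      · obtain ⟨k, hk, _⟩ := hEk p hh
        exact Or.inl ⟨k, hk hop⟩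
      · exact Or.inr (hunt p hpE hpL hh))
    (by
      by_cases hh : q ∈ E
      · obtain ⟨k, _, hk⟩ := hEk q hh
        exact Or.inl ⟨k, hk hoq⟩
      · exact Or.inr (hunt q hqE hqL hh))
  have hμ : (∑ k, Finsupp.single s(phi n hn (R k), phi n hn (C k)) 1 : Sym2 (Fin n) →₀ ℕ) =
      ∑ v ∈ m, Finsupp.single v 1 := by
    rw [← Finset.sum_coe_sort m, ← Equiv.sum_comp eqv]
    refine Finset.sum_congr rfl fun k _ => ?_
    rw [hvk]
  have hμv : ∀ v, (∑ v ∈ m, Finsupp.single v 1 : Sym2 (Fin n) →₀ ℕ) v = if v ∈ m then 1 else 0 := by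
    intro v
    simp [Finsupp.finsetSum_apply, Finsupp.single_apply]
  refine ⟨fun k => phi n hn (R k), fun k => phi n hn (C k), hφ.comp hR, hφ.comp hC,
    lead_of K rank _ _ _ hμ ?_⟩
  intro τ hτ
  have hνge : ∀ k, 1 ≤ (∑ k, Finsupp.single s(phi n hn (R (τ k)), phi n hn (C k)) 1 :
      Sym2 (Fin n) →₀ ℕ) s(phi n hn (R (τ k)), phi n hn (C k)) := by
    intro k
    rw [Finsupp.finsetSum_apply]
    refine le_trans ?_ (Finset.single_le_sum (fun _ _ => Nat.zero_le _) (Finset.mem_univ k))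
    simp
  have hdeg : ((∑ k, Finsupp.single s(phi n hn (R (τ k)), phi n hn (C k)) 1 :
      Sym2 (Fin n) →₀ ℕ).sum fun _ e => e) =
      ((∑ v ∈ m, Finsupp.single v 1 : Sym2 (Fin n) →₀ ℕ).sum fun _ e => e) := by
    rw [← hμ, deg_sum_single, deg_sum_single]
  by_cases hall : ∀ k, s(phi n hn (R (τ k)), phi n hn (C k)) ∈ Dset n ∪ Uset n
  · -- all in D ∪ U
    have hfix := core τ (by
      intro k
      rcases hall k with ⟨i, h⟩ | h
      · rw [Sym2.eq_iff] at h
        left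
        rcases h with ⟨h, h'⟩ | ⟨h, h'⟩ <;> exact hφ (h'.trans h.symm)
      · obtain ⟨i, h⟩ := (U_char n hn _).1 h
        rw [Sym2.eq_iff] at h
        right
        rcases h with ⟨h, h'⟩ | ⟨h, h'⟩
        · left; rw [hφ h, hφ h']
        · right; rw [hφ h, hφ h'])
    refine drl_of n rank hinj _ _ hdeg n ?_ ?_
    · intro v hv
      rw [hμv]
      split_ifs with hvm
      · have hk := hvk (eqv.symm ⟨v, hvm⟩)
        rw [Equiv.apply_symm_apply] at hk
        simp only at hk
        have hne : C (eqv.symm ⟨v, hvm⟩) ≠ R (eqv.symm ⟨v, hvm⟩) := by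
          intro h
          rw [h] at hk
          have := hrankD v ⟨_, hk⟩
          omega
        have := hνge (eqv.symm ⟨v, hvm⟩)
        rw [hfix _ hne, ← hk] at this
        exact this
      · exact Nat.zero_le _
    · obtain ⟨k, hk⟩ : ∃ k, τ k ≠ k := by
        by_contra hcon
        push Not at hcon
        exact hτ (Equiv.ext hcon)
      have hloop : C k = R k := by
        by_contra h
        exact hk (hfix k h)
      have hkL : R k ∈ L := by
        rcases hT k with ⟨a, b⟩ | ⟨a, b, c⟩ | ⟨a, b, c⟩
        · exact b
        · exact absurd (a.symm.trans hloop) (e1 _)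
        · exact absurd (a.symm.trans hloop.symm) (e1 _)
      have hU : s(phi n hn (R (τ k)), phi n hn (C k)) ∈ Uset n := by
        rcases hall k with ⟨i, h⟩ | h
        · exfalso
          rw [Sym2.eq_iff] at h
          apply hk
          apply hR
          rw [← hloop]
          rcases h with ⟨h, h'⟩ | ⟨h, h'⟩ <;> exact hφ (h.trans h'.symm)
        · exact h
      refine ⟨_, (hrankU _ hU).1, lt_of_lt_of_le ?_ (hνge k)⟩
      rw [hμv, if_neg]
      · exact Nat.zero_lt_one
      · intro hm
        exact (hsep _ _ _ ((hL _).1 hkL) hm hU).2 (by rw [hloop])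
  · push Not at hall
    obtain ⟨k, hk⟩ := hall
    have hbig : ∀ v, 2 * n ≤ rank v → (∑ v ∈ m, Finsupp.single v 1 : Sym2 (Fin n) →₀ ℕ) v = 0 := by
      intro v hv
      rw [hμv, if_neg]
      intro hm
      rcases hDU hm with h | h
      · have := hrankD v h; omega
      · have := hrankU v h; omega
    refine drl_of n rank hinj _ _ hdeg (2 * n) ?_ ?_
    · intro v hv
      rw [hbig v hv]; exact Nat.zero_le _
    · refine ⟨_, hrO _ hk, ?_⟩
      rw [hbig _ (hrO _ hk)]
      exact hνge k
end
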